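/- arXiv:2412.20729 — 2 statements merged into one kernel-verified Lean document; each statement's English description precedes it below -/
import Mathlib

section
/- If G is an n-vertex 2-connected chordal graph, then lct(G) ≤ 4(1 + ⌊log₂ n⌋). -/
open SimpleGraph

/-- A graph is chordal if every cycle on at least 4 vertices has a chord
(an edge of the graph joining two vertices of the cycle that is not an edge of the cycle). -/
def IsChordal {V : Type} (G : SimpleGraph V) : Prop :=
  ∀ (v : V) (c : G.Walk v v), c.IsCycle → 4 ≤ c.length →
    ∃ a b : V, a ∈ c.support ∧ b ∈ c.support ∧ G.Adj a b ∧ s(a, b) ∉ c.edges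

/-- A tree representation of `G` with host tree `T`: each vertex `u` of `G` gets a
nonempty subtree `S u` of `T`, and distinct vertices are adjacent iff their subtrees meet. -/
structure TreeRep {V W : Type} (G : SimpleGraph V) (T : SimpleGraph W) : Type where
  isTree : T.IsTree
  S : V → Set W
  subtree_connected : ∀ u : V, (T.induce (S u)).Connected
  adj_iff : ∀ u v : V, u ≠ v → (G.Adj u v ↔ (S u ∩ S v).Nonempty)

/-- A tree representation is minimal if no tree representation of `G` has a host tree
with fewer vertices. -/
def TreeRep.IsMinimal {V W : Type} [Fintype W] {G : SimpleGraph V} {T : SimpleGraph W}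
    (_R : TreeRep G T) : Prop :=
  ∀ (W' : Type) [Fintype W'] (T' : SimpleGraph W'),
    Nonempty (TreeRep G T') → Fintype.card W ≤ Fintype.card W'

/-- The bag of a host tree vertex `x`. -/
def TreeRep.bag {V W : Type} {G : SimpleGraph V} {T : SimpleGraph W}
    (R : TreeRep G T) (x : W) : Set V :=
  {u : V | x ∈ R.S u}

/-- In `T` rooted at `r`, the (vertex set of the) subtree rooted at `x`: all vertices `w`
such that the `r`–`w` path contains `x`. -/
def rootedSubtree {W : Type} (T : SimpleGraph W) (r x : W) : Set W :=
  {w : W | ∀ p : T.Walk r w, p.IsPath → x ∈ p.support}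

/-- The core of a subgraph `H` of `G`: the union over edges `uv` of `H` of `V(S u ∩ S v)`,
a set of host-tree vertices. -/
def TreeRep.core {V W : Type} {G : SimpleGraph V} {T : SimpleGraph W}
    (R : TreeRep G T) (H : G.Subgraph) : Set W :=
  {t : W | ∃ u v : V, H.Adj u v ∧ t ∈ R.S u ∧ t ∈ R.S v}

/-- `C` is a connected component of the subgraph of `T` induced on the vertex set `s`. -/
def IsCompOf {W : Type} (T : SimpleGraph W) (s C : Set W) : Prop :=
  C.Nonempty ∧ C ⊆ s ∧ (T.induce C).Connected ∧
    ∀ ⦃a b : W⦄, a ∈ C → b ∈ s → T.Adj a b → b ∈ C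

/-- A graph is 2-connected if it has more than 2 vertices and deleting any one vertex
leaves it connected. -/
def TwoConnected {V : Type} (G : SimpleGraph V) : Prop :=
  2 < Nat.card V ∧ ∀ v : V, (G.induce {v}ᶜ).Connected

/-- `G` is `k`-connected: more than `k` vertices, and deleting fewer than `k` vertices
leaves it connected. -/
def IsKConnectedGraph {V : Type} (G : SimpleGraph V) (k : ℕ) : Prop :=
  k < Nat.card V ∧ ∀ s : Set V, s.Finite → s.ncard < k → (G.induce sᶜ).Connected

/-- The vertex connectivity `κ(G)`: the maximum `k` such that `G` is `k`-connected. -/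
noncomputable def vertexConnectivity {V : Type} (G : SimpleGraph V) : ℕ :=
  sSup {k : ℕ | IsKConnectedGraph G k}

/-- `p` is a path of maximum length in `G`. -/
def IsLongestPath {V : Type} (G : SimpleGraph V) {a b : V} (p : G.Walk a b) : Prop :=
  p.IsPath ∧ ∀ (c d : V) (q : G.Walk c d), q.IsPath → q.length ≤ p.length

/-- `c` is a cycle of maximum length in `G`. -/
def IsLongestCycle {V : Type} (G : SimpleGraph V) {a : V} (c : G.Walk a a) : Prop :=
  c.IsCycle ∧ ∀ (d : V) (q : G.Walk d d), q.IsCycle → q.length ≤ c.length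

/-- The longest path transversal number of `G`: the least size of a set of vertices
meeting every longest path. -/
noncomputable def lpt {V : Type} (G : SimpleGraph V) : ℕ :=
  sInf {k : ℕ | ∃ A : Set V, A.Finite ∧ A.ncard = k ∧
    ∀ (a b : V) (p : G.Walk a b), IsLongestPath G p → ∃ v ∈ A, v ∈ p.support}

/-- The longest cycle transversal number of `G`: the least size of a set of vertices
meeting every longest cycle. -/
noncomputable def lct {V : Type} (G : SimpleGraph V) : ℕ :=
  sInf {k : ℕ | ∃ A : Set V, A.Finite ∧ A.ncard = k ∧
    ∀ (a : V) (c : G.Walk a a), IsLongestCycle G c → ∃ v ∈ A, v ∈ c.support}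

/-- `DQX T q X Q0`: the union, over `y ∈ Q0`, of the component of `X − E(Q)` containing
`y` (all vertices joined to some `y ∈ Q0` by a walk inside `X` avoiding the edges of `q`). -/
def DQX {W : Type} (T : SimpleGraph W) {x z : W} (q : T.Walk x z) (X : Set W)
    (Q0 : Set W) : Set W :=
  {w : W | ∃ y ∈ Q0, ∃ d : (T.deleteEdges {e : Sym2 W | e ∈ q.edges}).Walk y w,
    ∀ a ∈ d.support, a ∈ X}

/-- Cutter can force the Cutter–Chooser game from position `(X, x)` (a subtree `X` of the
host tree, rooted at `x`) to end within `t` rounds: Cutter picks `z ∈ X` and cuts along the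
`x`–`z` path `Q` in `X`; either `X = Q` (game over), or for every component `X'` of
`X − V(Q)` (with its root `x'`, the vertex of `X'` adjacent to `Q`) that Chooser may pick,
Cutter wins within `t - 1` further rounds. -/
def cutterWins {W : Type} (T : SimpleGraph W) : ℕ → Set W → W → Prop
  | 0, _, _ => False
  | t + 1, X, x =>
      ∃ z ∈ X, ∃ p : T.Walk x z, p.IsPath ∧ (∀ w ∈ p.support, w ∈ X) ∧
        (X = {w : W | w ∈ p.support} ∨
          ∀ (X' : Set W) (x' : W), IsCompOf T (X \ {w : W | w ∈ p.support}) X' →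
            x' ∈ X' → (∃ u ∈ p.support, T.Adj u x') → cutterWins T t X' x')

/-- `ccg(X, x)`: the number of rounds of the Cutter–Chooser game on the subtree `X` of the
host tree rooted at `x`, under optimal play. -/
noncomputable def ccgOn {W : Type} (T : SimpleGraph W) (X : Set W) (x : W) : ℕ :=
  sInf {t : ℕ | cutterWins T t X x}

/-- `ccg(T)`: the minimum over roots `r` of `ccg(T, r)`. -/
noncomputable def ccg {W : Type} (T : SimpleGraph W) : ℕ :=
  sInf (Set.range fun r : W => ccgOn T Set.univ r)

/-- A subdivided caterpillar: a tree having a (spine) path containing every vertex of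
degree at least 3. -/
def IsSubdividedCaterpillar {W : Type} (T : SimpleGraph W) : Prop :=
  T.IsTree ∧ ∃ (a b : W) (q : T.Walk a b), q.IsPath ∧
    ∀ v : W, 3 ≤ (T.neighborSet v).ncard → v ∈ q.support

/-- A subdivided star: a tree with at most one vertex of degree at least 3. -/
def IsSubdividedStar {W : Type} (T : SimpleGraph W) : Prop :=
  T.IsTree ∧ ∀ v w : W, 3 ≤ (T.neighborSet v).ncard → 3 ≤ (T.neighborSet w).ncard → v = w

/-- A leaf: a vertex of degree 1. -/
def IsLeaf {W : Type} (T : SimpleGraph W) (v : W) : Prop := (T.neighborSet v).ncard = 1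

/-- `mf T`: the maximum over edges `e` of `T` of the minimum number of leaves of `T`
contained in a component of `T − e`. -/
noncomputable def mf {W : Type} (T : SimpleGraph W) : ℕ :=
  sSup {k : ℕ | ∃ u v : W, T.Adj u v ∧
    k = min {w : W | IsLeaf T w ∧ (T.deleteEdges {s(u, v)}).Reachable u w}.ncard
            {w : W | IsLeaf T w ∧ (T.deleteEdges {s(u, v)}).Reachable v w}.ncard}

/-- In `T` rooted at `r`, `v` is a child of `u`. -/
def IsChildIn {W : Type} (T : SimpleGraph W) (r u v : W) : Prop :=
  T.Adj u v ∧ ∀ p : T.Walk r v, p.IsPath → u ∈ p.support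

/-- In `T` rooted at `r`, `u` is childless. -/
def IsChildlessIn {W : Type} (T : SimpleGraph W) (r u : W) : Prop :=
  ¬ ∃ v : W, IsChildIn T r u v

/-!
Order the vertices of the chordal graph `G` by a perfect elimination ordering. The later
neighbours of each vertex form a clique, and the first of them is its parent in the elimination
tree, which is the tree of a tree decomposition of `G` into cliques, the bags.

Any two longest cycles of a 2-connected graph share at least two vertices: otherwise there are
disjoint paths joining the two cycles, and they splice the longer arc of one cycle to the longer
arc of the other. Suppose all the longest cycles still to be hit meet the subtree of `x`, with `x`
as low as possible. Then each of them has two vertices outside the subtree of any proper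
descendant of `x`. Follow the heavy path from `x`, the nodes whose subtrees contain more than half
of the subtree of `x`, and let `a₁`, `a₂` be the two vertices of the bag of `x` whose presence in
bags persists longest along this path. A longest cycle that avoids `a₁` and `a₂` has an arc
between two vertices `b₁`, `b₂` whose interior lies in a branch hanging off the heavy path at a
bag containing `a₁` and `a₂`. Choose the longest path of this kind over all branches. A longest
cycle that avoids `a₁`, `a₂`, `b₁`, `b₂` meets the branch of that path: otherwise its own arc
through a branch could be replaced by `a₁`, that longer path and `a₂`. So four vertices reduce the
problem to a subtree of at most half the size.
-/

/-! ### Chordal graphs have perfect elimination orderings -/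

section Chordal

theorem mem_edges_of_adj_of_length_eq_dist {V : Type*} {G : SimpleGraph V} {u v x y : V}
    {p : G.Walk u v} (hp : p.length = G.dist u v) (hx : x ∈ p.support) (hy : y ∈ p.support)
    (hxy : G.Adj x y) : s(x, y) ∈ p.edges := by
  obtain ⟨i, rfl, hi⟩ := Walk.mem_support_iff_exists_getVert.mp hx
  obtain ⟨j, rfl, hj⟩ := Walk.mem_support_iff_exists_getVert.mp hy
  have shortcut : ∀ {k l : ℕ}, l ≤ p.length → G.Adj (p.getVert k) (p.getVert l) → l ≤ k + 1 := by
    intro k l hl hkl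
    have := dist_le ((p.take k).append (Walk.cons hkl (p.drop l)))
    rw [← hp, Walk.length_append, Walk.length_cons, Walk.take_length, Walk.drop_length] at this
    omega
  have hij : i ≠ j := by rintro rfl; exact hxy.ne rfl
  have hle := shortcut hj hxy
  have hge := shortcut hi hxy.symm
  rw [Walk.mk_mem_edges_iff_exists]
  obtain rfl | rfl : j = i + 1 ∨ i = j + 1 := by omega
  · exact ⟨i, by omega, rfl⟩
  · exact ⟨j, by omega, Sym2.eq_swap⟩

theorem exists_chordless_path_of_reachable_induce {V : Type*} {G : SimpleGraph V} {s : Set V}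
    {u v : s} (h : (G.induce s).Reachable u v) :
    ∃ p : G.Walk u v, p.IsPath ∧ (∀ x ∈ p.support, x ∈ s) ∧
      ∀ x ∈ p.support, ∀ y ∈ p.support, G.Adj x y → s(x, y) ∈ p.edges := by
  obtain ⟨p, hp, hlen⟩ := h.exists_path_of_dist
  let incl : G.induce s →g G := (Embedding.induce s).toHom
  have hsupport : (p.map incl).support = p.support.map Subtype.val := Walk.support_map incl p
  have hedges : (p.map incl).edges = p.edges.map (Sym2.map Subtype.val) := Walk.edges_map incl p
  refine ⟨p.map incl, hp.map Subtype.val_injective, fun _ hmem ↦ ?_, fun _ hmem _ hmem' hadj ↦ ?_⟩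
  · obtain ⟨x, -, rfl⟩ := List.mem_map.mp (hsupport ▸ hmem)
    exact x.2
  · obtain ⟨x, hx, rfl⟩ := List.mem_map.mp (hsupport ▸ hmem)
    obtain ⟨y, hy, rfl⟩ := List.mem_map.mp (hsupport ▸ hmem')
    exact hedges ▸ List.mem_map_of_mem (mem_edges_of_adj_of_length_eq_dist hlen hx hy hadj)

theorem exists_chordless_path_of_connected_induce {V : Type*} {G : SimpleGraph V} {A : Set V}
    (hA : (G.induce A).Connected) {u v : V} (hu : ∃ a ∈ A, G.Adj u a) (hv : ∃ a ∈ A, G.Adj v a) :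
    ∃ p : G.Walk u v, p.IsPath ∧ (∀ x ∈ p.support, x ∈ {u} ∪ A ∪ {v}) ∧
      ∀ x ∈ p.support, ∀ y ∈ p.support, G.Adj x y → s(x, y) ∈ p.edges := by
  obtain ⟨a, ha, hua⟩ := hu
  obtain ⟨a', ha', hva⟩ := hv
  have huA : (G.induce ({u} ∪ A)).Connected :=
    connected_induce_union .of_subsingleton hA.preconnected (Set.mem_singleton u) ha hua
  have huAv : (G.induce ({u} ∪ A ∪ {v})).Connected :=
    connected_induce_union huA.preconnected .of_subsingleton (Or.inr ha') (Set.mem_singleton v)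
      hva.symm
  exact exists_chordless_path_of_reachable_induce
    (huAv.preconnected ⟨u, by simp⟩ ⟨v, by simp⟩)

variable {V : Type} {G : SimpleGraph V}

/- A shortest path from `u` to `v` through `A` closes up through `b` to a cycle in which `s(u, v)`
is the only possible chord. -/
theorem IsChordal.adj_of_connected_induce (hG : IsChordal G) {A : Set V}
    (hA : (G.induce A).Connected) {b u v : V} (hbA : b ∉ A) (hb : ∀ a ∈ A, ¬ G.Adj b a)
    (hu : ∃ a ∈ A, G.Adj u a) (hv : ∃ a ∈ A, G.Adj v a) (hbu : G.Adj b u) (hbv : G.Adj b v)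
    (huv : u ≠ v) : G.Adj u v := by
  by_contra hnadj
  obtain ⟨p, hp, hpA, hchordless⟩ := exists_chordless_path_of_connected_induce hA hu hv
  have hbp : b ∉ p.support := fun h ↦ by
    rcases hpA b h with (rfl | h) | rfl
    exacts [hbu.ne rfl, hbA h, hbv.ne rfl]
  have hlen : 2 ≤ p.length := by
    by_contra! h
    interval_cases hl : p.length
    · exact huv (Walk.eq_of_length_eq_zero hl)
    · exact hnadj (Walk.adj_of_length_eq_one hl)
  have hcycle : (Walk.cons hbu (p.concat hbv.symm)).IsCycle :=
    Walk.isCycle_iff_isPath_tail_and_le_length.mpr ⟨by simpa using hp.concat hbp _, by simp; omega⟩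
  have hb_edge : ∀ x ∈ p.support, G.Adj b x → x = u ∨ x = v := fun x hx hbx ↦ by
    rcases hpA x hx with (rfl | h) | rfl
    exacts [.inl rfl, (hb x h hbx).elim, .inr rfl]
  obtain ⟨x, y, hx, hy, hxy, hchord⟩ := hG b _ hcycle (by simp; omega)
  simp only [Walk.support_cons, Walk.support_concat, Walk.edges_cons, Walk.edges_concat,
    List.mem_cons, List.concat_eq_append, List.mem_append, List.not_mem_nil, or_false,
    not_or, or_comm (b := _ = b), or_self_left] at hx hy hchord
  obtain ⟨hxu, hxyp, hxv⟩ := hchord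
  rcases hx with rfl | hx <;> rcases hy with rfl | hy
  · exact hxy.ne rfl
  · rcases hb_edge y hy hxy with rfl | rfl
    exacts [hxu rfl, hxv Sym2.eq_swap]
  · rcases hb_edge x hx hxy.symm with rfl | rfl
    exacts [hxu Sym2.eq_swap, hxv rfl]
  · exact hxyp (hchordless x hx y hy hxy)

end Chordal

section Simplicial

theorem exists_separated_of_not_isClique {V : Type*} {G : SimpleGraph V} {U : Set V}
    (hU : U.Finite) (hclique : ¬ G.IsClique U) :
    ∃ A ⊆ U, ∃ B ⊆ U, (G.induce A).Connected ∧ B.Nonempty ∧ Disjoint A B ∧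
      (∀ a ∈ A, ∀ b ∈ B, ¬ G.Adj b a) ∧
      ∀ n ∈ U, n ∉ A → n ∉ B → (∃ a ∈ A, G.Adj n a) ∧ ∀ b ∈ B, G.Adj n b := by
  let far (A : Set V) : Set V := {b ∈ U | b ∉ A ∧ ∀ a ∈ A, ¬ G.Adj b a}
  let family : Set (Set V) := {A | A ⊆ U ∧ (G.induce A).Connected ∧ (far A).Nonempty}
  obtain ⟨u, hu, w, hw, huw, hnadj⟩ : ∃ u ∈ U, ∃ w ∈ U, u ≠ w ∧ ¬ G.Adj u w := by
    simpa [isClique_iff, Set.Pairwise] using hclique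
  have hsingleton : {u} ∈ family := by
    refine ⟨by simpa using hu, (connected_iff _).mpr ⟨.of_subsingleton, inferInstance⟩, w, hw, ?_⟩
    simp [huw.symm, G.adj_comm w u, hnadj]
  obtain ⟨A, ⟨hAU, hAconn, hfar⟩, hmax⟩ :=
    (hU.finite_subsets.subset fun A hA ↦ hA.1 : family.Finite).exists_maximal ⟨_, hsingleton⟩
  refine ⟨A, hAU, far A, fun b hb ↦ hb.1, hAconn, hfar,
    Set.disjoint_right.mpr fun b hb ↦ hb.2.1, fun a ha b hb ↦ hb.2.2 a ha, ?_⟩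
  intro n hn hnA hnfar
  obtain ⟨a, ha, hna⟩ : ∃ a ∈ A, G.Adj n a := by
    by_contra! h
    exact hnfar ⟨hn, hnA, h⟩
  refine ⟨⟨a, ha, hna⟩, fun b hb ↦ ?_⟩
  by_contra hnb
  have hlarger : A ∪ {n} ∈ family := by
    refine ⟨Set.union_subset hAU (by simpa using hn), connected_induce_union
      hAconn.preconnected .of_subsingleton ha (Set.mem_singleton n) hna.symm, b, hb.1, ?_, ?_⟩
    · rintro (h | rfl)
      exacts [hb.2.1 h, hnfar hb]
    · rintro c (h | rfl)
      exacts [hb.2.2 c h, fun h ↦ hnb h.symm]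
  exact hnA (hmax hlarger Set.subset_union_left (.inr rfl))

variable {V : Type} {G : SimpleGraph V}

theorem IsChordal.exists_isClique_neighborSet_inter (hG : IsChordal G) {U : Set V}
    (hU : U.Finite) (hne : U.Nonempty) : ∃ s ∈ U, G.IsClique (G.neighborSet s ∩ U) := by
  induction hn : U.ncard using Nat.strong_induction_on generalizing U with
  | _ n ih =>
  subst hn
  by_cases hclique : G.IsClique U
  · obtain ⟨s, hs⟩ := hne
    exact ⟨s, hs, hclique.subset Set.inter_subset_right⟩
  obtain ⟨A, hAU, B, hBU, hA, hB, hAB, hsep, hboundary⟩ :=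
    exists_separated_of_not_isClique hU hclique
  obtain ⟨a, ha⟩ := hA.nonempty
  have hlt : B.ncard < U.ncard := Set.ncard_lt_ncard
    ⟨hBU, fun h ↦ hAB.notMem_of_mem_left ha (h (hAU ha))⟩ hU
  obtain ⟨s, hs, hsB⟩ := ih _ hlt (hU.subset hBU) hB rfl
  refine ⟨s, hBU hs, ?_⟩
  rintro u ⟨hsu, huU⟩ v ⟨hsv, hvU⟩ huv
  have huA : u ∉ A := fun h ↦ hsep u h s hs hsu
  have hvA : v ∉ A := fun h ↦ hsep v h s hs hsv
  by_cases huB : u ∈ B <;> by_cases hvB : v ∈ B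
  · exact hsB ⟨hsu, huB⟩ ⟨hsv, hvB⟩ huv
  · exact ((hboundary v hvU hvA hvB).2 u huB).symm
  · exact (hboundary u huU huA huB).2 v hvB
  · exact hG.adj_of_connected_induce hA (hAB.notMem_of_mem_right hs) (fun a ha ↦ hsep a ha s hs)
      (hboundary u huU huA huB).1 (hboundary v hvU hvA hvB).1 hsu hsv huv

end Simplicial

/-- A perfect elimination ordering of `G`, given by an injective rank function: the neighbours of
any vertex of larger rank form a clique. -/
structure PerfectElimination {V : Type*} (G : SimpleGraph V) where
  rank : V → ℕ
  rank_injective : Function.Injective rank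
  isClique_later : ∀ v, G.IsClique {u | G.Adj v u ∧ rank v < rank u}

theorem IsChordal.exists_rank_injOn {V : Type} {G : SimpleGraph V} (hG : IsChordal G)
    (U : Finset V) : ∃ rank : V → ℕ, Set.InjOn rank U ∧
      ∀ v ∈ U, G.IsClique {u | u ∈ U ∧ G.Adj v u ∧ rank v < rank u} := by
  classical
  induction U using Finset.strongInduction with
  | H U ih =>
  obtain rfl | hne := U.eq_empty_or_nonempty
  · exact ⟨fun _ ↦ 0, by simp, by simp⟩
  obtain ⟨s, hs, hclique⟩ := hG.exists_isClique_neighborSet_inter U.finite_toSet hne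
  obtain ⟨rank, hinj, hlater⟩ := ih _ (Finset.erase_ssubset hs)
  refine ⟨fun v ↦ if v = s then 0 else rank v + 1, fun v hv w hw h ↦ ?_, fun v hv ↦ ?_⟩
  · by_cases hvs : v = s <;> by_cases hws : w = s
    · exact hvs.trans hws.symm
    · simp [hvs, hws] at h
    · simp [hvs, hws] at h
    · exact hinj (by simpa [hvs] using hv) (by simpa [hws] using hw) (by simpa [hvs, hws] using h)
  · by_cases hvs : v = s
    · subst hvs
      refine hclique.subset fun u ⟨huU, hvu, _⟩ ↦ ?_
      exact ⟨hvu, huU⟩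
    · refine (hlater v (by simp [hvs, hv])).subset fun u ⟨huU, hvu, hlt⟩ ↦ ?_
      have hus : u ≠ s := by
        rintro rfl
        simp at hlt
      exact ⟨by simp [hus, huU], hvu, by simpa [hvs, hus] using hlt⟩

theorem IsChordal.nonempty_perfectElimination {V : Type} [Finite V] {G : SimpleGraph V}
    (hG : IsChordal G) : Nonempty (PerfectElimination G) := by
  have := Fintype.ofFinite V
  obtain ⟨rank, hinj, hlater⟩ := hG.exists_rank_injOn Finset.univ
  exact ⟨⟨rank, by simpa using hinj, fun v ↦ by simpa using hlater v⟩⟩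

/-! ### The elimination tree -/

namespace PerfectElimination

variable {V : Type*} {G : SimpleGraph V} (σ : PerfectElimination G)

/-- The neighbours of `v` that are eliminated after `v`. -/
def later (v : V) : Set V := {u | G.Adj v u ∧ σ.rank v < σ.rank u}

/-- The parent relation of the elimination tree: the parent of `v` is its first later neighbour. -/
def IsParent (v p : V) : Prop := p ∈ σ.later v ∧ ∀ u ∈ σ.later v, σ.rank p ≤ σ.rank u

/-- The vertices of the elimination tree below `x`, with `x` included. -/
def subtree (x : V) : Set V := {w | Relation.ReflTransGen σ.IsParent w x}

/-- The bag of the node `q` when the elimination tree is read as a tree decomposition of `G` into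
cliques. -/
def bag (q : V) : Set V := insert q (σ.later q)

variable {σ} {a p q q' u v w x y z : V}

theorem exists_isParent (h : (σ.later v).Nonempty) : ∃ p, σ.IsParent v p := by
  obtain ⟨p, hp, hmin⟩ := exists_minimalFor_of_wellFoundedLT (· ∈ σ.later v) σ.rank h
  exact ⟨p, hp, fun u hu ↦ (le_total _ _).elim id (hmin hu)⟩

theorem IsParent.unique (hp : σ.IsParent v p) (hq : σ.IsParent v q) : p = q :=
  σ.rank_injective (le_antisymm (hp.2 q hq.1) (hq.2 p hp.1))

theorem isClique_bag : G.IsClique (σ.bag q) :=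
  (σ.isClique_later q).insert fun _ hu _ ↦ hu.1

theorem rank_le_of_mem_bag (h : a ∈ σ.bag q) : σ.rank q ≤ σ.rank a := by
  obtain rfl | h := h
  exacts [le_rfl, h.2.le]

theorem IsParent.later_subset_bag (h : σ.IsParent v p) : σ.later v ⊆ σ.bag p := fun u hu ↦ by
  by_cases hup : u = p
  · exact .inl hup
  · exact .inr ⟨σ.isClique_later v h.1 hu (Ne.symm hup),
      (h.2 u hu).lt_of_ne fun e ↦ hup (σ.rank_injective e).symm⟩

theorem mem_subtree_self : x ∈ σ.subtree x := .refl

theorem IsParent.mem_subtree (h : σ.IsParent v p) : v ∈ σ.subtree p := .single h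

theorem subtree_subset (h : y ∈ σ.subtree x) : σ.subtree y ⊆ σ.subtree x := fun _ hw ↦ hw.trans h

theorem rank_le_of_mem_subtree (h : w ∈ σ.subtree x) : σ.rank w ≤ σ.rank x := by
  induction h with
  | refl => exact le_rfl
  | tail _ h ih => exact ih.trans h.1.2.le

theorem eq_of_mem_subtree_of_rank_le (h : w ∈ σ.subtree x) (hle : σ.rank x ≤ σ.rank w) : w = x :=
  σ.rank_injective (le_antisymm (rank_le_of_mem_subtree h) hle)

theorem later_subset_of_mem_subtree (h : w ∈ σ.subtree x) :
    σ.later w ⊆ σ.subtree x ∪ σ.later x := by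
  induction h using Relation.ReflTransGen.head_induction_on with
  | refl => exact Set.subset_union_right
  | head hwp hpx ih =>
    intro u hu
    obtain rfl | hu := hwp.later_subset_bag hu
    exacts [.inl hpx, ih hu]

theorem mem_subtree_of_mem_later (h : u ∈ σ.later v) : v ∈ σ.subtree u := by
  induction hn : σ.rank u - σ.rank v using Nat.strong_induction_on generalizing v with
  | _ n ih =>
  obtain ⟨p, hp⟩ := exists_isParent ⟨u, h⟩
  obtain rfl | hu := hp.later_subset_bag h
  · exact hp.mem_subtree
  · have := h.2
    have := hp.1.2
    exact (ih _ (by omega) hu rfl).head hp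

theorem mem_later_of_adj_of_notMem_subtree (hadj : G.Adj w u) (hw : w ∈ σ.subtree x)
    (hu : u ∉ σ.subtree x) : u ∈ σ.later x := by
  rcases lt_trichotomy (σ.rank w) (σ.rank u) with hlt | heq | hlt
  · exact (later_subset_of_mem_subtree hw ⟨hadj, hlt⟩).resolve_left hu
  · exact absurd (σ.rank_injective heq) hadj.ne
  · exact absurd (subtree_subset hw (mem_subtree_of_mem_later ⟨hadj.symm, hlt⟩)) hu

theorem exists_isParent_of_mem_subtree_of_ne (hw : w ∈ σ.subtree x) (hne : w ≠ x) :
    ∃ z, σ.IsParent z x ∧ w ∈ σ.subtree z := by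
  obtain rfl | ⟨z, hwz, hzx⟩ := Relation.ReflTransGen.cases_tail hw
  exacts [absurd rfl hne, ⟨z, hzx, hwz⟩]

theorem mem_subtree_total (hx : w ∈ σ.subtree x) (hy : w ∈ σ.subtree y) :
    x ∈ σ.subtree y ∨ y ∈ σ.subtree x :=
  Relation.ReflTransGen.total_of_right_unique (fun _ _ _ hp hq ↦ hp.unique hq) hx hy

theorem mem_bag_of_mem_subtree (ha : a ∈ σ.bag q') (hq : q' ∈ σ.subtree q)
    (hle : σ.rank q ≤ σ.rank a) : a ∈ σ.bag q := by
  obtain rfl | ha := ha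
  · exact .inl (eq_of_mem_subtree_of_rank_le hq hle)
  · exact (later_subset_of_mem_subtree hq ha).imp_left fun h ↦ eq_of_mem_subtree_of_rank_le h hle

theorem exists_mem_later_of_walk (p : G.Walk v w) (hlt : σ.rank v < σ.rank w) :
    ∃ u ∈ σ.later v, u ∈ p.support := by
  obtain ⟨d, hd, hfst, hsnd⟩ := p.exists_boundary_dart (σ.subtree v) mem_subtree_self
    fun h ↦ (rank_le_of_mem_subtree h).not_gt hlt
  exact ⟨d.snd, mem_later_of_adj_of_notMem_subtree d.adj hfst hsnd,
    p.dart_snd_mem_support_of_mem_darts hd⟩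

theorem mem_subtree_of_preconnected (hG : G.Preconnected) (hx : ∀ v, σ.rank v ≤ σ.rank x) (v : V) :
    v ∈ σ.subtree x := by
  induction hn : σ.rank x - σ.rank v using Nat.strong_induction_on generalizing v with
  | _ n ih =>
  obtain heq | hlt := (hx v).eq_or_lt
  · exact σ.rank_injective heq ▸ mem_subtree_self
  · obtain ⟨walk⟩ := hG v x
    obtain ⟨u, hu, -⟩ := exists_mem_later_of_walk walk hlt
    have := hu.2
    exact subtree_subset (ih _ (by omega) u rfl) (mem_subtree_of_mem_later hu)

theorem exists_walk_of_mem_subtree (h : w ∈ σ.subtree x) :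
    ∃ p : G.Walk w x, ∀ y ∈ p.support, σ.rank w ≤ σ.rank y := by
  induction h using Relation.ReflTransGen.head_induction_on with
  | refl => exact ⟨.nil, by simp⟩
  | head hwp _ ih =>
    obtain ⟨p, hp⟩ := ih
    refine ⟨.cons hwp.1.1 p, fun y hy ↦ ?_⟩
    obtain rfl | hy := List.mem_cons.mp hy
    exacts [le_rfl, hwp.1.2.le.trans (hp y hy)]

end PerfectElimination

section TwoConnected

variable {V : Type} {G : SimpleGraph V}

theorem TwoConnected.exists_walk_notMem (h : TwoConnected G) {u v x : V} (hu : u ≠ x)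
    (hv : v ≠ x) : ∃ p : G.Walk u v, x ∉ p.support := by
  obtain ⟨p⟩ := (h.2 x).preconnected ⟨u, hu⟩ ⟨v, hv⟩
  refine ⟨p.map (Embedding.induce {x}ᶜ).toHom, fun hx ↦ ?_⟩
  obtain ⟨y, -, hy⟩ := List.mem_map.mp (Walk.support_map _ p ▸ hx)
  exact y.2 hy

theorem TwoConnected.connected (h : TwoConnected G) : G.Connected := by
  have hthird (u v : V) : ∃ x, x ∉ ({u, v} : Set V) := by
    by_contra! hall
    have hle : ({u, v} : Set V).ncard ≤ 2 := by
      simpa using Set.ncard_insert_le u {v}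
    rw [Set.eq_univ_of_forall hall, Set.ncard_univ] at hle
    exact hle.not_gt h.1
  have : Nonempty V := (Nat.card_pos_iff.mp (by have := h.1; omega)).1
  refine ⟨fun u v ↦ ?_⟩
  obtain ⟨x, hx⟩ := hthird u v
  obtain ⟨p, -⟩ := h.exists_walk_notMem (u := u) (v := v) (x := x) (by grind) (by grind)
  exact ⟨p⟩

end TwoConnected

/-! ### Paths and cycles -/

section Walk

variable {V : Type*} {G : SimpleGraph V} {a b u v w : V}

theorem isPath_append_of_forall_eq {p : G.Walk u v} {q : G.Walk v w} (hp : p.IsPath)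
    (hq : q.IsPath) (h : ∀ x ∈ p.support, x ∈ q.support → x = v) : (p.append q).IsPath := by
  have hqv := hq.support_nodup
  rw [← q.cons_tail_support, List.nodup_cons] at hqv
  rw [Walk.isPath_def, Walk.support_append, List.nodup_append']
  refine ⟨hp.support_nodup, hqv.2, fun x hxp hxq ↦ hqv.1 ?_⟩
  exact h x hxp (List.mem_of_mem_tail hxq) ▸ hxq

theorem isCycle_append_iff_of_ne {p : G.Walk u v} {q : G.Walk v u} (huv : u ≠ v) :
    (p.append q).IsCycle ↔ p.IsPath ∧ q.IsPath ∧
      (∀ x ∈ p.support, x ∈ q.support → x = u ∨ x = v) ∧ (1 < p.length ∨ 1 < q.length) := by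
  have hpnil : ¬ p.Nil := Walk.not_nil_of_ne huv
  have hqnil : ¬ q.Nil := Walk.not_nil_of_ne huv.symm
  refine ⟨fun h ↦ ⟨h.isPath_of_append_left hqnil, h.isPath_of_append_right hpnil, ?_, ?_⟩, ?_⟩
  · have htail := h.support_nodup
    rw [Walk.tail_support_append, List.nodup_append'] at htail
    intro x hxp hxq
    rw [Walk.mem_support_iff] at hxp hxq
    exact hxp.imp_right fun hxp ↦ hxq.resolve_right fun hxq ↦ htail.2.2 hxp hxq
  · have := h.three_le_length
    rw [Walk.length_append] at this
    omega
  · rintro ⟨hp, hq, hmeet, hlen⟩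
    refine hp.isCycle_append hq (fun x hxp hxq ↦ ?_) hlen
    have hpu := hp.support_nodup
    have hqv := hq.support_nodup
    rw [← Walk.cons_tail_support, List.nodup_cons] at hpu hqv
    rcases hmeet x (List.mem_of_mem_tail hxp) (List.mem_of_mem_tail hxq) with rfl | rfl
    exacts [hpu.1 hxp, hqv.1 hxq]

/-- `p` is a path from `S` to `T` in the sense of Menger's theorem: its first vertex is its only
vertex in `S`, and its last vertex is its only vertex in `T`. -/
structure IsPathBetween (S T : Set V) (p : G.Walk a b) : Prop where
  isPath : p.IsPath
  start_mem : a ∈ S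
  end_mem : b ∈ T
  eq_start : ∀ x ∈ p.support, x ∈ S → x = a
  eq_end : ∀ x ∈ p.support, x ∈ T → x = b

theorem exists_isPathBetween {S T : Set V} (p : G.Walk u v) (hu : u ∈ S) (hv : v ∈ T) :
    ∃ (a b : V) (q : G.Walk a b), IsPathBetween S T q ∧ ∀ x ∈ q.support, x ∈ p.support := by
  classical
  obtain ⟨⟨a, b, q⟩, ⟨ha, hb, hsub⟩, hmin⟩ := exists_minimalFor_of_wellFoundedLT
    (fun q : Σ a b, G.Walk a b ↦ q.1 ∈ S ∧ q.2.1 ∈ T ∧ ∀ x ∈ q.2.2.support, x ∈ p.support)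
    (fun q ↦ q.2.2.length) ⟨⟨u, v, p⟩, hu, hv, fun _ ↦ id⟩
  have hsub' : ∀ x ∈ q.bypass.support, x ∈ p.support :=
    fun x hx ↦ hsub x (q.support_bypass_subset_support hx)
  have hshort : ∀ {a' b' : V} (r : G.Walk a' b'), a' ∈ S → b' ∈ T →
      r.support ⊆ q.bypass.support → ¬ r.length < q.bypass.length := fun r ha' hb' hr hlt ↦
    (hlt.trans_le q.length_bypass_le_length).not_ge <|
      hmin (j := ⟨_, _, r⟩) ⟨ha', hb', fun x hx ↦ hsub' x (hr hx)⟩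
        (hlt.le.trans q.length_bypass_le_length)
  refine ⟨a, b, q.bypass, ⟨q.bypass_isPath, ha, hb, fun x hx hxS ↦ ?_, fun x hx hxT ↦ ?_⟩, hsub'⟩
  · by_contra hxa
    exact hshort (q.bypass.dropUntil x hx) hxS hb (q.bypass.support_dropUntil_subset_support hx)
      (Walk.length_dropUntil_lt_length hx hxa)
  · by_contra hxb
    exact hshort (q.bypass.takeUntil x hx) ha hxT (q.bypass.support_takeUntil_subset_support hx)
      (Walk.length_takeUntil_lt_length hx hxb)

end Walk

/-! ### Longest cycles -/

/-- `C` is the vertex set of a longest cycle of `G`. -/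
def IsLongestCycleSupport {V : Type} (G : SimpleGraph V) (C : Set V) : Prop :=
  ∃ (v : V) (c : G.Walk v v), IsLongestCycle G c ∧ {w | w ∈ c.support} = C

/-- `p` and `q` are the two arcs, with distinct ends, into which a longest cycle on the vertex
set `C` splits. -/
structure IsArcPair {V : Type} {G : SimpleGraph V} {a b : V} (C : Set V) (p : G.Walk a b)
    (q : G.Walk b a) : Prop where
  ne : a ≠ b
  isLongestCycle : IsLongestCycle G (p.append q)
  mem_iff : ∀ x, x ∈ C ↔ x ∈ p.support ∨ x ∈ q.support

section ArcPair

variable {V : Type} {G : SimpleGraph V} {C C₀ S : Set V} {a b a' b' : V}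
  {p : G.Walk a b} {q : G.Walk b a}

theorem IsLongestCycleSupport.exists_isArcPair (hC : IsLongestCycleSupport G C) (ha : a ∈ C)
    (hb : b ∈ C) (hab : a ≠ b) : ∃ (p : G.Walk a b) (q : G.Walk b a), IsArcPair C p q := by
  classical
  obtain ⟨v, c, ⟨hc, hmax⟩, rfl⟩ := hC
  have hb' : b ∈ (c.rotate a ha).support := (c.mem_support_rotate_iff a ha).mpr hb
  refine ⟨(c.rotate a ha).takeUntil b hb', (c.rotate a ha).dropUntil b hb', hab, ?_, fun x ↦ ?_⟩
  · rw [Walk.take_spec]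
    exact ⟨hc.rotate ha, by simpa using hmax⟩
  · rw [← Walk.mem_support_append_iff, Walk.take_spec, Walk.mem_support_rotate_iff]
    rfl

theorem IsLongestCycleSupport.nontrivial (hC : IsLongestCycleSupport G C) : C.Nontrivial := by
  obtain ⟨v, c, ⟨hc, -⟩, rfl⟩ := hC
  cases c with
  | nil => exact absurd rfl hc.ne_nil
  | cons h p => exact ⟨v, by simp, _, by simp, h.ne⟩

namespace IsArcPair

theorem isPath_left (h : IsArcPair C p q) : p.IsPath :=
  ((isCycle_append_iff_of_ne h.ne).mp h.isLongestCycle.1).1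

theorem isPath_right (h : IsArcPair C p q) : q.IsPath :=
  ((isCycle_append_iff_of_ne h.ne).mp h.isLongestCycle.1).2.1

theorem symm (h : IsArcPair C p q) : IsArcPair C q p := by
  obtain ⟨hp, hq, hmeet, hlen⟩ := (isCycle_append_iff_of_ne h.ne).mp h.isLongestCycle.1
  refine ⟨h.ne.symm, ⟨(isCycle_append_iff_of_ne h.ne.symm).mpr
    ⟨hq, hp, fun x hxq hxp ↦ (hmeet x hxp hxq).symm, hlen.symm⟩, fun d c hc ↦ ?_⟩,
    fun x ↦ (h.mem_iff x).trans or_comm⟩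
  simpa [add_comm] using h.isLongestCycle.2 d c hc

theorem split_left {c : V} {p₁ : G.Walk a c} {p₂ : G.Walk c b}
    (h : IsArcPair C (p₁.append p₂) q) (hac : a ≠ c) : IsArcPair C p₁ (p₂.append q) :=
  ⟨hac, by simpa [Walk.append_assoc] using h.isLongestCycle,
    fun x ↦ by simp [h.mem_iff, Walk.mem_support_append_iff, or_assoc]⟩

theorem split_right {c : V} {p₁ : G.Walk a c} {p₂ : G.Walk c b}
    (h : IsArcPair C (p₁.append p₂) q) (hac : a ≠ c) (hcb : c ≠ b) :
    IsArcPair C p₂ (q.append p₁) :=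
  (h.split_left hac).symm.split_left hcb

theorem length_le (h : IsArcPair C p q) {r : G.Walk a b} (hr : r.IsPath)
    (hmeet : ∀ x ∈ r.support, x ∈ q.support → x = a ∨ x = b) : r.length ≤ p.length := by
  have hp : p.length ≠ 0 := fun h0 ↦ h.ne (Walk.eq_of_length_eq_zero h0)
  by_cases hlen : 1 < r.length ∨ 1 < q.length
  · have hcycle := (isCycle_append_iff_of_ne h.ne).mpr ⟨hr, h.isPath_right, hmeet, hlen⟩
    simpa using h.isLongestCycle.2 a _ hcycle
  · omega

theorem length_add_two_le (h : IsArcPair C p q) {r : G.Walk a' b'} (hr : r.IsPath)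
    (hdisj : ∀ x ∈ r.support, x ∉ C) (ha : G.Adj a a') (hb : G.Adj b' b) :
    r.length + 2 ≤ p.length := by
  have har : a ∉ r.support := fun hx ↦ hdisj a hx ((h.mem_iff a).mpr (by simp))
  have hbr : b ∉ r.support := fun hx ↦ hdisj b hx ((h.mem_iff b).mpr (by simp))
  have hpath : (Walk.cons ha (r.concat hb)).IsPath :=
    (hr.concat hbr hb).cons (by simpa [Walk.support_concat, har] using h.ne)
  have hle := h.length_le hpath fun x hx hxq ↦ by
    have hxr : x ∉ r.support := fun hxr ↦ hdisj x hxr ((h.mem_iff x).mpr (.inr hxq))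
    simpa [Walk.support_concat, hxr] using hx
  rwa [Walk.length_cons, Walk.length_concat] at hle

theorem two_mul_length_le (h : IsArcPair C p q) {r : G.Walk a b} (hr : r.IsPath)
    (hmeet : ∀ x ∈ r.support, x ∈ C → x = a ∨ x = b) : 2 * r.length ≤ (p.append q).length := by
  have hrp : r.length ≤ p.length :=
    h.length_le hr fun x hx hxq ↦ hmeet x hx ((h.mem_iff x).mpr (.inr hxq))
  have hrq : r.reverse.length ≤ q.length := h.symm.length_le hr.reverse fun x hx hxp ↦
    (hmeet x (by simpa using hx) ((h.mem_iff x).mpr (.inl hxp))).symm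
  rw [Walk.length_reverse] at hrq
  rw [Walk.length_append]
  omega

theorem exists_boundary (h : IsArcPair C p q) (ha : a ∉ S) (hb : b ∈ S) :
    ∃ (c d : V) (e : G.Walk c d) (r : G.Walk d c),
      IsArcPair C e r ∧ e.length = 1 ∧ c ∉ S ∧ d ∈ S := by
  induction p with
  | nil => exact absurd rfl h.ne
  | @cons a c b hadj p ih =>
    have hsplit : IsArcPair C ((Walk.cons hadj .nil).append p) q := h
    by_cases hc : c ∈ S
    · exact ⟨a, c, _, _, hsplit.split_left hadj.ne, rfl, ha, hc⟩
    · exact ih (hsplit.split_right hadj.ne fun hcb ↦ hc (hcb ▸ hb)) hc hb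

end IsArcPair

namespace IsLongestCycleSupport

theorem exists_isArcPair_length_eq_one (hC : IsLongestCycleSupport G C) (hout : (C \ S).Nonempty)
    (hin : (C ∩ S).Nonempty) : ∃ (c d : V) (e : G.Walk c d) (r : G.Walk d c),
      IsArcPair C e r ∧ e.length = 1 ∧ c ∉ S ∧ d ∈ S := by
  obtain ⟨⟨u, huC, huS⟩, w, hwC, hwS⟩ := And.intro hout hin
  obtain ⟨p, q, h⟩ := hC.exists_isArcPair huC hwC fun huw ↦ huS (huw ▸ hwS)
  exact h.exists_boundary huS hwS

theorem exists_isArcPair_forall_mem (hC : IsLongestCycleSupport G C) (hout : (C \ S).Nontrivial)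
    (hin : (C ∩ S).Nonempty) : ∃ (c d : V) (p : G.Walk c d) (q : G.Walk d c),
      IsArcPair C p q ∧ c ∉ S ∧ d ∉ S ∧ (∃ x ∈ p.support, x ∈ S) ∧
        ∀ x ∈ p.support, x = c ∨ x = d ∨ x ∈ S := by
  have hex : ∃ r : Σ c d, G.Walk c d × G.Walk d c, IsArcPair C r.2.2.1 r.2.2.2 ∧
      r.1 ∉ S ∧ r.2.1 ∉ S ∧ ∃ x ∈ r.2.2.1.support, x ∈ S := by
    obtain ⟨⟨u, hu, v, hv, huv⟩, x, hxC, hxS⟩ := And.intro hout hin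
    obtain ⟨p, q, h⟩ := hC.exists_isArcPair hu.1 hv.1 huv
    obtain hx | hx := (h.mem_iff x).mp hxC
    exacts [⟨⟨u, v, p, q⟩, h, hu.2, hv.2, x, hx, hxS⟩,
      ⟨⟨v, u, q, p⟩, h.symm, hv.2, hu.2, x, hx, hxS⟩]
  obtain ⟨⟨c, d, p, q⟩, ⟨h, hc, hd, x, hx, hxS⟩, hmin⟩ :=
    exists_minimalFor_of_wellFoundedLT _ (fun r ↦ r.2.2.1.length) hex
  refine ⟨c, d, p, q, h, hc, hd, ⟨x, hx, hxS⟩, fun y hy ↦ ?_⟩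
  by_contra! hyne
  obtain ⟨hyc, hyd, hyS⟩ := hyne
  obtain ⟨p₁, p₂, rfl⟩ := Walk.mem_support_iff_exists_append.mp hy
  have hp₁ : p₁.length ≠ 0 := fun h0 ↦ hyc (Walk.eq_of_length_eq_zero h0).symm
  have hp₂ : p₂.length ≠ 0 := fun h0 ↦ hyd (Walk.eq_of_length_eq_zero h0)
  obtain hx | hx := (Walk.mem_support_append_iff ..).mp hx
  · have := @hmin ⟨c, y, p₁, p₂.append q⟩ ⟨h.split_left hyc.symm, hc, hyS, x, hx, hxS⟩
    simp only [Walk.length_append] at this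
    omega
  · have := @hmin ⟨y, d, p₂, q.append p₁⟩ ⟨h.split_right hyc.symm hyd, hyS, hd, x, hx, hxS⟩
    simp only [Walk.length_append] at this
    omega

theorem exists_isPath_two_mul_length (hC : IsLongestCycleSupport G C) (ha : a ∈ C) (hb : b ∈ C)
    (hab : a ≠ b) : ∃ r : G.Walk a b, r.IsPath ∧ (∀ x ∈ r.support, x ∈ C) ∧
      ∀ (d : V) (c : G.Walk d d), c.IsCycle → c.length ≤ 2 * r.length := by
  obtain ⟨p, q, h⟩ := hC.exists_isArcPair ha hb hab
  have hmax := h.isLongestCycle.2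
  simp only [Walk.length_append] at hmax
  obtain hle | hle := le_total q.length p.length
  · exact ⟨p, h.isPath_left, fun x hx ↦ (h.mem_iff x).mpr (.inl hx),
      fun d c hc ↦ (hmax d c hc).trans (by omega)⟩
  · exact ⟨q.reverse, h.isPath_right.reverse,
      fun x hx ↦ (h.mem_iff x).mpr (.inr (by simpa using hx)),
      fun d c hc ↦ (hmax d c hc).trans (by rw [Walk.length_reverse]; omega)⟩

theorem not_forall_mem_of_isPathBetween (hC : IsLongestCycleSupport G C)
    (hC₀ : IsLongestCycleSupport G C₀) {s₁ s₂ b₁ b₂ : V} {p : G.Walk s₁ b₁} {q : G.Walk s₂ b₂}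
    (hp : IsPathBetween C₀ C p) (hq : IsPathBetween C₀ C q)
    (hdisj : ∀ x ∈ p.support, x ∉ q.support) : ¬ ∀ x ∈ C, x ∈ C₀ → x ∈ p.support := by
  -- Otherwise the longer arc of `C₀` between `s₁` and `s₂`, prolonged by `p` and `q`, is longer
  -- than the shorter arc of `C` between `b₁` and `b₂`.
  intro hmeet
  have hs : s₁ ≠ s₂ := fun hs ↦ hdisj s₁ p.start_mem_support (hs ▸ q.start_mem_support)
  have hb : b₁ ≠ b₂ := fun hb ↦ hdisj b₁ p.end_mem_support (hb ▸ q.end_mem_support)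
  obtain ⟨r, hr, hrC₀, hlong⟩ := hC₀.exists_isPath_two_mul_length hp.start_mem hq.start_mem hs
  obtain ⟨P, Q, harc⟩ := hC.exists_isArcPair hp.end_mem hq.end_mem hb
  have hpr : (p.reverse.append r).IsPath :=
    isPath_append_of_forall_eq hp.isPath.reverse hr fun x hxp hxr ↦
      hp.eq_start x (by simpa using hxp) (hrC₀ x hxr)
  have hprq : ((p.reverse.append r).append q).IsPath := by
    refine isPath_append_of_forall_eq hpr hq.isPath fun x hx hxq ↦ ?_
    obtain hxp | hxr := (Walk.mem_support_append_iff ..).mp hx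
    exacts [absurd hxq (hdisj x (by simpa using hxp)), hq.eq_start x hxq (hrC₀ x hxr)]
  have hle := harc.two_mul_length_le hprq fun x hx hxC ↦ by
    simp only [Walk.mem_support_append_iff, Walk.support_reverse, List.mem_reverse] at hx
    obtain (hxp | hxr) | hxq := hx
    exacts [.inl (hp.eq_end x hxp hxC), .inl (hp.eq_end x (hmeet x hxC (hrC₀ x hxr)) hxC),
      .inr (hq.eq_end x hxq hxC)]
  have hle' := hlong _ _ harc.isLongestCycle.1
  simp only [Walk.length_append, Walk.length_reverse] at hle hle'
  have hsb : s₂ = b₂ := Walk.eq_of_length_eq_zero (p := q) (by omega)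
  exact hdisj s₂ (hmeet s₂ (hsb ▸ hq.end_mem) hq.start_mem) q.start_mem_support

end IsLongestCycleSupport
end ArcPair

/-! ### Any two longest cycles share two vertices -/

/-- There are two vertex-disjoint walks from `S` to `T` inside `U`. -/
def HasDisjointWalks {V : Type*} (G : SimpleGraph V) (U S T : Set V) : Prop :=
  ∃ s ∈ S, ∃ s' ∈ S, ∃ t ∈ T, ∃ t' ∈ T, ∃ (p : G.Walk s t) (q : G.Walk s' t'),
    (∀ x ∈ p.support, x ∈ U) ∧ (∀ x ∈ q.support, x ∈ U) ∧ ∀ x ∈ p.support, x ∉ q.support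

namespace HasDisjointWalks

variable {V : Type*} {G : SimpleGraph V} {U U' S T : Set V} {s u v : V}

theorem mono (h : HasDisjointWalks G U S T) (hU : U ⊆ U') : HasDisjointWalks G U' S T := by
  obtain ⟨s, hs, s', hs', t, ht, t', ht', p, q, hp, hq, hdisj⟩ := h
  exact ⟨s, hs, s', hs', t, ht, t', ht', p, q, fun x hx ↦ hU (hp x hx), fun x hx ↦ hU (hq x hx),
    hdisj⟩

theorem symm (h : HasDisjointWalks G U S T) : HasDisjointWalks G U T S := by
  obtain ⟨s, hs, s', hs', t, ht, t', ht', p, q, hp, hq, hdisj⟩ := h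
  exact ⟨t, ht, t', ht', s, hs, s', hs', p.reverse, q.reverse, by simpa using hp, by simpa using hq,
    by simpa using hdisj⟩

theorem cons_start (h : HasDisjointWalks G U {u, s} T) (hadj : G.Adj v u) (hv : v ∉ U)
    (hvS : v ∈ S) (hsS : s ∈ S) : HasDisjointWalks G (insert v U) S T := by
  obtain ⟨s₁, hs₁, s₂, hs₂, t₁, ht₁, t₂, ht₂, p, q, hp, hq, hdisj⟩ := h
  have hvp : v ∉ p.support := fun hx ↦ hv (hp v hx)
  have hvq : v ∉ q.support := fun hx ↦ hv (hq v hx)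
  obtain rfl | rfl := hs₁
  · obtain rfl | rfl := hs₂
    · exact absurd q.start_mem_support (hdisj _ p.start_mem_support)
    · exact ⟨v, hvS, s₂, hsS, t₁, ht₁, t₂, ht₂, .cons hadj p, q, by simp_all, by simp_all,
        by simp_all⟩
  · obtain rfl | rfl := hs₂
    · refine ⟨s₁, hsS, v, hvS, t₁, ht₁, t₂, ht₂, p, .cons hadj q, by simp_all, by simp_all,
        fun x hx hxq ↦ ?_⟩
      obtain rfl | hxq := List.mem_cons.mp hxq
      exacts [hvp hx, hdisj x hx hxq]
    · exact absurd q.start_mem_support (hdisj _ p.start_mem_support)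

end HasDisjointWalks

section TwoConnected

variable {V : Type} {G : SimpleGraph V} {σ : PerfectElimination G} {C C₀ S T : Set V} {r v : V}

theorem hasDisjointWalks_of_mem_inter (hroot : ∀ w, w ∈ σ.subtree r) (hS : S.Nontrivial)
    (hT : T.Nontrivial) (hvS : v ∈ S) (hvT : v ∈ T) (hS' : ∀ s ∈ S, σ.rank v ≤ σ.rank s)
    (hT' : ∀ t ∈ T, σ.rank v ≤ σ.rank t) :
    HasDisjointWalks G {w | σ.rank v ≤ σ.rank w} S T := by
  obtain ⟨s, hs, hsv⟩ := hS.exists_ne v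
  obtain ⟨t, ht, htv⟩ := hT.exists_ne v
  obtain ⟨p, hp⟩ := PerfectElimination.exists_walk_of_mem_subtree (hroot s)
  obtain ⟨q, hq⟩ := PerfectElimination.exists_walk_of_mem_subtree (hroot t)
  have hlts : σ.rank v < σ.rank s := (hS' s hs).lt_of_ne (σ.rank_injective.ne hsv.symm)
  have hltt : σ.rank v < σ.rank t := (hT' t ht).lt_of_ne (σ.rank_injective.ne htv.symm)
  have hlt : ∀ x ∈ (p.append q.reverse).support, σ.rank v < σ.rank x := fun x hx ↦ by
    rw [Walk.mem_support_append_iff, Walk.support_reverse, List.mem_reverse] at hx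
    exact hx.elim (fun hx ↦ hlts.trans_le (hp x hx)) fun hx ↦ hltt.trans_le (hq x hx)
  refine ⟨v, hvS, s, hs, v, hvT, t, ht, .nil, p.append q.reverse, by simp,
    fun x hx ↦ (hlt x hx).le, fun x hxv hx ↦ (hlt x hx).ne ?_⟩
  rw [List.mem_singleton.mp hxv]

theorem TwoConnected.exists_mem_later_ne (h2 : TwoConnected G) {s : V} (hT : T.Nontrivial)
    (hsv : s ≠ v) (hT' : ∀ t ∈ T, σ.rank v < σ.rank t) : ∃ u ∈ σ.later v, u ≠ s := by
  obtain ⟨t, ht, hts⟩ := hT.exists_ne s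
  obtain ⟨p, hp⟩ := h2.exists_walk_notMem hsv.symm hts
  obtain ⟨u, hu, hup⟩ := PerfectElimination.exists_mem_later_of_walk p (hT' t ht)
  exact ⟨u, hu, fun hus ↦ hp (hus ▸ hup)⟩

theorem TwoConnected.hasDisjointWalks_of_forall_pair (h2 : TwoConnected G) (hS : S.Nontrivial)
    (hT : T.Nontrivial) (hvS : v ∈ S) (hS' : ∀ s ∈ S, σ.rank v ≤ σ.rank s)
    (hT' : ∀ t ∈ T, σ.rank v < σ.rank t)
    (hpair : ∀ u s, u ≠ s → σ.rank v < σ.rank u → σ.rank v < σ.rank s →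
      HasDisjointWalks G {w | σ.rank v < σ.rank w} {u, s} T) :
    HasDisjointWalks G {w | σ.rank v ≤ σ.rank w} S T := by
  obtain ⟨s, hs, hsv⟩ := hS.exists_ne v
  obtain ⟨u, hu, hus⟩ := h2.exists_mem_later_ne hT hsv hT'
  have hlt : σ.rank v < σ.rank s := (hS' s hs).lt_of_ne (σ.rank_injective.ne hsv.symm)
  refine ((hpair u s hus hu.2 hlt).cons_start hu.1 (by simp) hvS hs).mono ?_
  exact Set.insert_subset (le_refl (σ.rank v)) fun w hw ↦ Nat.le_of_lt hw

theorem TwoConnected.hasDisjointWalks_rank_le (h2 : TwoConnected G)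
    (hroot : ∀ w, w ∈ σ.subtree r) (m : ℕ) (hS : S.Nontrivial) (hT : T.Nontrivial)
    (hSm : ∀ s ∈ S, m ≤ σ.rank s) (hTm : ∀ t ∈ T, m ≤ σ.rank t) :
    HasDisjointWalks G {w | m ≤ σ.rank w} S T := by
  induction hn : σ.rank r + 1 - m generalizing m S T with
  | zero =>
    obtain ⟨s, hs⟩ := hS.nonempty
    have := hSm s hs
    have := PerfectElimination.rank_le_of_mem_subtree (hroot s)
    omega
  | succ n ih =>
  have hsucc {S : Set V} (hSm : ∀ s ∈ S, m ≤ σ.rank s) (hne : ∀ s ∈ S, σ.rank s ≠ m) :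
      ∀ s ∈ S, m + 1 ≤ σ.rank s := fun s hs ↦ (hSm s hs).lt_of_ne (hne s hs).symm
  have hup {S T : Set V} (hS : S.Nontrivial) (hT : T.Nontrivial) (hSm : ∀ s ∈ S, m ≤ σ.rank s)
      (hT' : ∀ t ∈ T, m + 1 ≤ σ.rank t) {v : V} (hvS : v ∈ S) (hv : σ.rank v = m) :
      HasDisjointWalks G {w | m ≤ σ.rank w} S T := by
    subst hv
    exact h2.hasDisjointWalks_of_forall_pair hS hT hvS hSm hT' fun u s hne hu hs ↦
      ih (σ.rank v + 1) (Set.nontrivial_pair hne) hT (by simp [hu, hs]) hT' (by omega)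
  by_cases hvS : ∃ v ∈ S, σ.rank v = m <;> by_cases hvT : ∃ v ∈ T, σ.rank v = m
  · obtain ⟨⟨v, hv, rfl⟩, w, hw, hvw⟩ := And.intro hvS hvT
    obtain rfl := σ.rank_injective hvw
    exact hasDisjointWalks_of_mem_inter hroot hS hT hv hw hSm hTm
  · obtain ⟨v, hvS, hv⟩ := hvS
    exact hup hS hT hSm (hsucc hTm (by push Not at hvT; exact hvT)) hvS hv
  · obtain ⟨v, hvT, hv⟩ := hvT
    exact (hup hT hS hTm (hsucc hSm (by push Not at hvS; exact hvS)) hvT hv).symm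
  · push Not at hvS hvT
    exact (ih _ hS hT (hsucc hSm hvS) (hsucc hTm hvT) (by omega)).mono
      fun w hw ↦ (Nat.le_succ m).trans hw

theorem IsLongestCycleSupport.nontrivial_inter (h2 : TwoConnected G)
    (hroot : ∀ w, w ∈ σ.subtree r) (hC : IsLongestCycleSupport G C)
    (hC₀ : IsLongestCycleSupport G C₀) : (C ∩ C₀).Nontrivial := by
  by_contra hinter
  obtain hempty | ⟨v, hv⟩ := (Set.not_nontrivial_iff.mp hinter).eq_empty_or_singleton
  · obtain ⟨s, hs, s', hs', t, ht, t', ht', p, q, -, -, hdisj⟩ := h2.hasDisjointWalks_rank_le hroot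
      0 hC₀.nontrivial hC.nontrivial (fun _ _ ↦ Nat.zero_le _) fun _ _ ↦ Nat.zero_le _
    obtain ⟨a, b, p', hp', hpp'⟩ := exists_isPathBetween p hs ht
    obtain ⟨a', b', q', hq', hqq'⟩ := exists_isPathBetween q hs' ht'
    exact hC.not_forall_mem_of_isPathBetween hC₀ hp' hq'
      (fun x hx hxq ↦ hdisj x (hpp' x hx) (hqq' x hxq))
      fun x hx hx₀ ↦ absurd (hempty.subset ⟨hx, hx₀⟩) (Set.notMem_empty x)
  · have hvmem : v ∈ C ∩ C₀ := hv ▸ Set.mem_singleton v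
    obtain ⟨s, hs, hsv⟩ := hC₀.nontrivial.exists_ne v
    obtain ⟨t, ht, htv⟩ := hC.nontrivial.exists_ne v
    obtain ⟨q, hq⟩ := h2.exists_walk_notMem hsv htv
    obtain ⟨a, b, q', hq', hqq'⟩ := exists_isPathBetween q hs ht
    have hnil : IsPathBetween C₀ C (Walk.nil : G.Walk v v) :=
      ⟨.nil, hvmem.2, hvmem.1, by simp, by simp⟩
    refine hC.not_forall_mem_of_isPathBetween hC₀ hnil hq' ?_ fun x hx hx₀ ↦ ?_
    · simpa using fun hvq ↦ hq (hqq' v hvq)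
    · simpa using hv.subset ⟨hx, hx₀⟩

end TwoConnected

/-! ### Heavy paths in the elimination tree -/

namespace PerfectElimination

section HeavyPath

variable {V : Type*} {G : SimpleGraph V} (σ : PerfectElimination G)

/-- The path that starts at `x` in the elimination tree and descends as long as the subtree below
contains more than half of the vertices of `σ.subtree x`. -/
def heavyPath (x : V) : Set V :=
  {q | q ∈ σ.subtree x ∧ (σ.subtree x).ncard < 2 * (σ.subtree q).ncard}

variable {σ} [Finite V] {q q' x : V} {A : Set V}

theorem ncard_subtree_pos : 0 < (σ.subtree x).ncard :=
  (Set.ncard_pos (Set.toFinite _)).mpr ⟨x, mem_subtree_self⟩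

theorem ncard_subtree_le (h : q ∈ σ.subtree x) : (σ.subtree q).ncard ≤ (σ.subtree x).ncard :=
  Set.ncard_le_ncard (subtree_subset h) (Set.toFinite _)

theorem self_mem_heavyPath : x ∈ σ.heavyPath x :=
  ⟨mem_subtree_self, by have := ncard_subtree_pos (σ := σ) (x := x); omega⟩

theorem mem_subtree_of_mem_heavyPath (hq : q ∈ σ.heavyPath x) (hq' : q' ∈ σ.heavyPath x)
    (hle : σ.rank q ≤ σ.rank q') : q ∈ σ.subtree q' := by
  have hmeet : ¬ Disjoint (σ.subtree q) (σ.subtree q') := fun hdisj ↦ by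
    have hunion := Set.ncard_union_eq hdisj (Set.toFinite _) (Set.toFinite _)
    have hsub := Set.ncard_le_ncard
      (Set.union_subset (subtree_subset hq.1) (subtree_subset hq'.1)) (Set.toFinite _)
    have := hq.2
    have := hq'.2
    omega
  obtain ⟨w, hw, hw'⟩ := Set.not_disjoint_iff.mp hmeet
  obtain h | h := mem_subtree_total hw hw'
  · exact h
  · exact eq_of_mem_subtree_of_rank_le h hle ▸ mem_subtree_self

theorem exists_mem_forall_mem_bag (hA : A.Nonempty) (hAx : A ⊆ σ.bag x) :
    ∃ a ∈ A, ∀ c ∈ A, ∀ q ∈ σ.heavyPath x, c ∈ σ.bag q → a ∈ σ.bag q := by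
  obtain ⟨a₀, ha₀⟩ := hA
  obtain ⟨⟨a, q₀⟩, ⟨ha, hq₀, haq₀⟩, hmin⟩ := exists_minimalFor_of_wellFoundedLT
    (fun r : V × V ↦ r.1 ∈ A ∧ r.2 ∈ σ.heavyPath x ∧ r.1 ∈ σ.bag r.2) (fun r ↦ σ.rank r.2)
    ⟨(a₀, x), ha₀, self_mem_heavyPath, hAx ha₀⟩
  refine ⟨a, ha, fun c hc q hq hcq ↦ ?_⟩
  have hle : σ.rank q₀ ≤ σ.rank q :=
    (le_total _ _).elim id (@hmin (c, q) ⟨hc, hq, hcq⟩)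
  exact mem_bag_of_mem_subtree haq₀ (mem_subtree_of_mem_heavyPath hq₀ hq hle)
    ((rank_le_of_mem_subtree hq.1).trans (rank_le_of_mem_bag (hAx ha)))

/-- `a₁` and `a₂` are the two vertices of `σ.bag x` that stay in the bags furthest down the heavy
path from `x`, with `a₁ = a₂` allowed when `σ.bag x` has a single vertex. -/
structure IsDeepestPair (σ : PerfectElimination G) (x a₁ a₂ : V) : Prop where
  ne_of_mem_bag : ∀ c ∈ σ.bag x, c ≠ a₁ → c ≠ a₂ → a₁ ≠ a₂
  left_mem_bag : ∀ c ∈ σ.bag x, c ≠ a₁ → c ≠ a₂ → ∀ q ∈ σ.heavyPath x, c ∈ σ.bag q → a₁ ∈ σ.bag q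
  right_mem_bag : ∀ c ∈ σ.bag x, c ≠ a₁ → c ≠ a₂ → ∀ q ∈ σ.heavyPath x, c ∈ σ.bag q → a₂ ∈ σ.bag q

theorem exists_isDeepestPair (x : V) : ∃ a₁ a₂, σ.IsDeepestPair x a₁ a₂ := by
  obtain ⟨a₁, -, h₁⟩ := exists_mem_forall_mem_bag (σ := σ) ⟨x, Set.mem_insert x _⟩ subset_rfl
  obtain hempty | hne := (σ.bag x \ {a₁}).eq_empty_or_nonempty
  · have heq : ∀ c ∈ σ.bag x, c = a₁ := fun c hc ↦ by
      by_contra hca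
      exact hempty.subset ⟨hc, hca⟩
    exact ⟨a₁, a₁, fun c hc hca ↦ absurd (heq c hc) hca, fun c hc hca ↦ absurd (heq c hc) hca,
      fun c hc hca ↦ absurd (heq c hc) hca⟩
  · obtain ⟨a₂, ha₂, h₂⟩ := exists_mem_forall_mem_bag hne Set.sdiff_subset
    exact ⟨a₁, a₂, fun _ _ _ _ ↦ Ne.symm ha₂.2, fun c hc _ _ ↦ h₁ c hc,
      fun c hc hca _ ↦ h₂ c ⟨hc, hca⟩⟩

end HeavyPath

/-! ### Detours through light branches -/

section Detour

variable {V : Type*} {G : SimpleGraph V} {σ : PerfectElimination G}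
  {a₁ a₂ b₁ b₂ q x z : V}

/-- `z` is the root of a branch that leaves the heavy path from `x` at a node whose bag contains
`a₁` and `a₂`. -/
structure IsLightBranch (σ : PerfectElimination G) (x a₁ a₂ z : V) : Prop where
  notMem_heavyPath : z ∉ σ.heavyPath x
  exists_isParent : ∃ q ∈ σ.heavyPath x, σ.IsParent z q ∧ a₁ ∈ σ.bag q ∧ a₂ ∈ σ.bag q

/-- `p` is a path between two distinct later neighbours of `z` whose other vertices lie below
`z`. -/
structure IsDetour (σ : PerfectElimination G) (z : V) (p : G.Walk b₁ b₂) : Prop where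
  isPath : p.IsPath
  ne : b₁ ≠ b₂
  start_mem : b₁ ∈ σ.later z
  end_mem : b₂ ∈ σ.later z
  mem_subtree : ∀ y ∈ p.support, y = b₁ ∨ y = b₂ ∨ y ∈ σ.subtree z

theorem IsLightBranch.mem_subtree (h : σ.IsLightBranch x a₁ a₂ z) : z ∈ σ.subtree x := by
  obtain ⟨q, hq, hzq, -⟩ := h.exists_isParent
  exact subtree_subset hq.1 hzq.mem_subtree

theorem IsLightBranch.two_mul_ncard_subtree_le (h : σ.IsLightBranch x a₁ a₂ z) :
    2 * (σ.subtree z).ncard ≤ (σ.subtree x).ncard :=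
  not_lt.mp fun hlt ↦ h.notMem_heavyPath ⟨h.mem_subtree, hlt⟩

theorem IsDetour.eq_or_eq_of_mem_bag {p : G.Walk b₁ b₂} (h : σ.IsDetour z p)
    (hzq : σ.IsParent z q) {y : V} (hy : y ∈ p.support) (hyq : y ∈ σ.bag q) :
    y = b₁ ∨ y = b₂ := by
  refine (h.mem_subtree y hy).imp_right fun hy ↦ hy.resolve_right fun hyz ↦ ?_
  exact ((rank_le_of_mem_subtree hyz).trans_lt hzq.1.2).not_ge (rank_le_of_mem_bag hyq)

end Detour

end PerfectElimination

section Reroute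

variable {V : Type*} {G : SimpleGraph V} {a a₁ a₂ b₁ b₂ : V} {K : Set V}

theorem exists_isPath_from {p : G.Walk b₁ b₂} (hp : p.IsPath) (hK : G.IsClique K) (ha : a ∈ K)
    (hb₁ : b₁ ∈ K) (hap : a ∈ p.support → a = b₁) : ∃ p' : G.Walk a b₂, p'.IsPath ∧
      p.length ≤ p'.length ∧ ∀ y ∈ p'.support, y = a ∨ y ∈ p.support := by
  by_cases hab : a = b₁
  · subst hab
    exact ⟨p, hp, le_rfl, fun y hy ↦ .inr hy⟩
  · exact ⟨.cons (hK ha hb₁ hab) p, hp.cons fun h ↦ hab (hap h), by simp, by simp⟩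

theorem exists_isPath_reroute {p : G.Walk b₁ b₂} (hp : p.IsPath) (hK : G.IsClique K)
    (ha₁ : a₁ ∈ K) (ha₂ : a₂ ∈ K) (ha : a₁ ≠ a₂) (hb₁ : b₁ ∈ K) (hb₂ : b₂ ∈ K) (hb : b₁ ≠ b₂)
    (hpK : ∀ y ∈ p.support, y ∈ K → y = b₁ ∨ y = b₂) : ∃ p' : G.Walk a₁ a₂, p'.IsPath ∧
      p.length ≤ p'.length ∧ ∀ y ∈ p'.support, y = a₁ ∨ y = a₂ ∨ y ∈ p.support := by
  wlog horient : a₁ ≠ b₂ ∧ a₂ ≠ b₁ generalizing b₁ b₂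
  · obtain ⟨p', hp', hle, hsub⟩ := this hp.reverse hb₂ hb₁ hb.symm
      (fun y hy hyK ↦ (hpK y (by simpa using hy) hyK).symm) (by grind)
    exact ⟨p', hp', by simpa using hle, by simpa using hsub⟩
  obtain ⟨p₁, hp₁, hle₁, hsub₁⟩ := exists_isPath_from hp hK ha₁ hb₁
    fun h ↦ (hpK a₁ h ha₁).resolve_right horient.1
  obtain ⟨p₂, hp₂, hle₂, hsub₂⟩ := exists_isPath_from hp₁.reverse hK ha₂ hb₂ fun h ↦ by
    have hap : a₂ ∈ p.support := (hsub₁ a₂ (by simpa using h)).resolve_left ha.symm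
    exact (hpK a₂ hap ha₂).resolve_left horient.2
  refine ⟨p₂.reverse, hp₂.reverse, ?_, fun y hy ↦ ?_⟩
  · rw [Walk.length_reverse] at hle₂ ⊢
    exact hle₁.trans hle₂
  · obtain h | h := hsub₂ y (by simpa using hy)
    · exact .inr (.inl h)
    · exact (hsub₁ y (by simpa using h)).imp_right .inr

end Reroute

/-! ### Hitting the longest cycles -/

namespace PerfectElimination

variable {V : Type} {G : SimpleGraph V}

/-- `C` is the vertex set of a longest cycle that meets the subtree of `x` and has at least two
vertices outside the subtree of each proper descendant of `x`. -/
structure IsCentredAt (σ : PerfectElimination G) (C : Set V) (x : V) : Prop where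
  isLongestCycleSupport : IsLongestCycleSupport G C
  nonempty_inter : (C ∩ σ.subtree x).Nonempty
  nontrivial_sdiff : ∀ z ∈ σ.subtree x, z ≠ x → (C \ σ.subtree z).Nontrivial

variable {σ : PerfectElimination G} {C : Set V} {F : Set (Set V)} {a₁ a₂ r x z : V}

theorem exists_forall_isCentredAt (h2 : TwoConnected G) (hroot : ∀ w, w ∈ σ.subtree r)
    (hF : ∀ C ∈ F, IsLongestCycleSupport G C) (hx : ∀ C ∈ F, (C ∩ σ.subtree x).Nonempty) :
    ∃ y ∈ σ.subtree x, ∀ C ∈ F, σ.IsCentredAt C y := by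
  obtain ⟨y, ⟨hyx, hy⟩, hmin⟩ := exists_minimalFor_of_wellFoundedLT
    (fun y ↦ y ∈ σ.subtree x ∧ ∀ C ∈ F, (C ∩ σ.subtree y).Nonempty) σ.rank
    ⟨x, mem_subtree_self, hx⟩
  refine ⟨y, hyx, fun C hC ↦ ⟨hF C hC, hy C hC, fun z hz hzy ↦ ?_⟩⟩
  have hmiss : ∃ C₀ ∈ F, ¬ (C₀ ∩ σ.subtree z).Nonempty := by
    by_contra! hall
    exact hzy (eq_of_mem_subtree_of_rank_le hz
      (hmin ⟨subtree_subset hyx hz, hall⟩ (rank_le_of_mem_subtree hz)))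
  obtain ⟨C₀, hC₀, hdisj⟩ := hmiss
  exact ((hF C hC).nontrivial_inter h2 hroot (hF C₀ hC₀)).mono
    fun w hw ↦ ⟨hw.1, fun hwz ↦ hdisj ⟨w, hw.2, hwz⟩⟩

theorem IsCentredAt.exists_isArcPair_mem_bag (h : σ.IsCentredAt C x) :
    ∃ (c d : V) (e : G.Walk c d) (s : G.Walk d c),
      IsArcPair C e s ∧ e.length = 1 ∧ c ∈ σ.bag x ∧ d ∈ σ.subtree x := by
  by_cases hbelow : ∃ w ∈ C ∩ σ.subtree x, w ≠ x
  · obtain ⟨w, ⟨hwC, hwx⟩, hne⟩ := hbelow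
    obtain ⟨z, hzx, hwz⟩ := exists_isParent_of_mem_subtree_of_ne hwx hne
    obtain ⟨c, d, e, s, harc, he, hc, hd⟩ :=
      h.isLongestCycleSupport.exists_isArcPair_length_eq_one
        (h.nontrivial_sdiff z hzx.mem_subtree hzx.1.1.ne).nonempty ⟨w, hwC, hwz⟩
    exact ⟨c, d, e, s, harc, he, hzx.later_subset_bag <|
      mem_later_of_adj_of_notMem_subtree (Walk.adj_of_length_eq_one he).symm hd hc,
      subtree_subset hzx.mem_subtree hd⟩
  · push Not at hbelow
    obtain ⟨w, hwC, hwx⟩ := h.isLongestCycleSupport.nontrivial.exists_ne x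
    obtain ⟨c, d, e, s, harc, he, hc, hd⟩ :=
      h.isLongestCycleSupport.exists_isArcPair_length_eq_one
        ⟨w, hwC, fun hw ↦ hwx (hbelow w ⟨hwC, hw⟩)⟩ h.nonempty_inter
    exact ⟨c, d, e, s, harc, he, .inr <|
      mem_later_of_adj_of_notMem_subtree (Walk.adj_of_length_eq_one he).symm hd hc, hd⟩

theorem IsCentredAt.exists_isLightBranch [Finite V] (h : σ.IsCentredAt C x)
    (hpair : σ.IsDeepestPair x a₁ a₂) (ha₁ : a₁ ∉ C) (ha₂ : a₂ ∉ C) :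
    a₁ ≠ a₂ ∧ ∃ z, σ.IsLightBranch x a₁ a₂ z ∧ (C ∩ σ.subtree z).Nonempty := by
  obtain ⟨c, d, e, s, harc, he, hcx, hdx⟩ := h.exists_isArcPair_mem_bag
  have hcC : c ∈ C := (harc.mem_iff c).mpr (.inl e.start_mem_support)
  have hdC : d ∈ C := (harc.mem_iff d).mpr (.inl e.end_mem_support)
  have hca₁ : c ≠ a₁ := fun hca ↦ ha₁ (hca ▸ hcC)
  have hca₂ : c ≠ a₂ := fun hca ↦ ha₂ (hca ▸ hcC)
  obtain ⟨q, ⟨hq, hdq⟩, hmin⟩ := exists_minimalFor_of_wellFoundedLT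
    (fun q ↦ q ∈ σ.heavyPath x ∧ d ∈ σ.subtree q) σ.rank ⟨x, self_mem_heavyPath, hdx⟩
  have hcq : c ∈ σ.bag q := by
    by_cases hc : c ∈ σ.subtree q
    · exact .inl (eq_of_mem_subtree_of_rank_le hc
        ((rank_le_of_mem_subtree hq.1).trans (rank_le_of_mem_bag hcx)))
    · exact .inr (mem_later_of_adj_of_notMem_subtree (Walk.adj_of_length_eq_one he).symm hdq hc)
  have ha₁q := hpair.left_mem_bag c hcx hca₁ hca₂ q hq hcq
  have ha₂q := hpair.right_mem_bag c hcx hca₁ hca₂ q hq hcq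
  refine ⟨hpair.ne_of_mem_bag c hcx hca₁ hca₂, ?_⟩
  -- If `d = q`, then `a₁` is adjacent to both `c` and `d` and can be inserted between them.
  have hdne : d ≠ q := by
    rintro rfl
    have hlong := harc.length_add_two_le (Walk.IsPath.nil (u := a₁)) (by simpa using ha₁)
      (isClique_bag hcq ha₁q hca₁)
      (isClique_bag ha₁q (Set.mem_insert d _) fun had ↦ ha₁ (had ▸ hdC))
    omega
  obtain ⟨z, hzq, hdz⟩ := exists_isParent_of_mem_subtree_of_ne hdq hdne
  have hz : z ∉ σ.heavyPath x := fun hz ↦ hzq.1.2.not_ge (hmin ⟨hz, hdz⟩ hzq.1.2.le)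
  exact ⟨z, ⟨hz, q, hq, hzq, ha₁q, ha₂q⟩, d, hdC, hdz⟩

theorem isDetour_of_forall_mem {b₁ b₂ : V} {p : G.Walk b₁ b₂} (hp : p.IsPath) (hne : b₁ ≠ b₂)
    (hb₁ : b₁ ∉ σ.subtree z) (hb₂ : b₂ ∉ σ.subtree z) (hz : ∃ y ∈ p.support, y ∈ σ.subtree z)
    (hmem : ∀ y ∈ p.support, y = b₁ ∨ y = b₂ ∨ y ∈ σ.subtree z) : σ.IsDetour z p := by
  classical
  have hstart {b₁ b₂ : V} {p : G.Walk b₁ b₂} (hp : p.IsPath) (hb₁ : b₁ ∉ σ.subtree z)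
      (hb₂ : b₂ ∉ σ.subtree z) (hz : ∃ y ∈ p.support, y ∈ σ.subtree z)
      (hmem : ∀ y ∈ p.support, y = b₁ ∨ y = b₂ ∨ y ∈ σ.subtree z) : b₁ ∈ σ.later z := by
    obtain ⟨y, hy, hyz⟩ := hz
    obtain ⟨d, hd, hfst, hsnd⟩ := (p.takeUntil y hy).exists_boundary_dart (σ.subtree z)ᶜ hb₁
      (not_not.mpr hyz)
    have hdfst := Walk.dart_fst_mem_support_of_mem_darts _ hd
    have hne₂ : d.fst ≠ b₂ := fun h ↦
      Walk.endpoint_notMem_support_takeUntil hp hy (fun hyb ↦ hb₂ (hyb ▸ hyz)) (h ▸ hdfst)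
    have hfst₁ : d.fst = b₁ := by
      have := hmem _ (p.support_takeUntil_subset_support hy hdfst)
      tauto
    exact hfst₁ ▸ mem_later_of_adj_of_notMem_subtree d.adj.symm (not_not.mp hsnd) hfst
  refine ⟨hp, hne, hstart hp hb₁ hb₂ hz hmem, ?_, hmem⟩
  refine hstart hp.reverse hb₂ hb₁ (by simpa using hz) ?_
  simpa [or_left_comm] using hmem

theorem IsCentredAt.exists_isDetour [Finite V] (h : σ.IsCentredAt C x)
    (hpair : σ.IsDeepestPair x a₁ a₂) (ha₁ : a₁ ∉ C) (ha₂ : a₂ ∉ C) :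
    ∃ z, σ.IsLightBranch x a₁ a₂ z ∧ ∃ (b₁ b₂ : V) (p : G.Walk b₁ b₂) (s : G.Walk b₂ b₁),
      IsArcPair C p s ∧ σ.IsDetour z p := by
  obtain ⟨-, z, hz, hCz⟩ := h.exists_isLightBranch hpair ha₁ ha₂
  have hzx : z ≠ x := fun hzx ↦ hz.notMem_heavyPath (hzx ▸ self_mem_heavyPath)
  obtain ⟨b₁, b₂, p, s, harc, hb₁, hb₂, hmeet, hmem⟩ :=
    h.isLongestCycleSupport.exists_isArcPair_forall_mem
      (h.nontrivial_sdiff z hz.mem_subtree hzx) hCz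
  exact ⟨z, hz, b₁, b₂, p, s, harc,
    isDetour_of_forall_mem harc.isPath_left harc.ne hb₁ hb₂ hmeet hmem⟩

theorem IsDetour.exists_isPath_length_le {b₁ b₂ : V} {p : G.Walk b₁ b₂} (hp : σ.IsDetour z p)
    (hz : σ.IsLightBranch x a₁ a₂ z) (ha : a₁ ≠ a₂) : ∃ p' : G.Walk a₁ a₂, p'.IsPath ∧
      p.length ≤ p'.length ∧ ∀ y ∈ p'.support, y = a₁ ∨ y = a₂ ∨ y ∈ p.support := by
  obtain ⟨q, -, hzq, ha₁, ha₂⟩ := hz.exists_isParent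
  exact exists_isPath_reroute hp.isPath isClique_bag ha₁ ha₂ ha (hzq.later_subset_bag hp.start_mem)
    (hzq.later_subset_bag hp.end_mem) hp.ne fun y hy hyq ↦ hp.eq_or_eq_of_mem_bag hzq hy hyq

theorem IsLightBranch.length_add_two_le {a b : V} {p : G.Walk a b} {s : G.Walk b a}
    (hz : σ.IsLightBranch x a₁ a₂ z) (harc : IsArcPair C p s) (hp : σ.IsDetour z p)
    {p' : G.Walk a₁ a₂} (hp' : p'.IsPath) (hdisj : ∀ y ∈ p'.support, y ∉ C) :
    p'.length + 2 ≤ p.length := by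
  obtain ⟨q, -, hzq, ha₁, ha₂⟩ := hz.exists_isParent
  have hne {v w : V} (hv : v ∈ p'.support) (hw : w ∈ p.support) : v ≠ w :=
    fun hvw ↦ hdisj v hv ((harc.mem_iff v).mpr (.inl (hvw ▸ hw)))
  exact harc.length_add_two_le hp' hdisj
    (isClique_bag (hzq.later_subset_bag hp.start_mem) ha₁ (hne (by simp) (by simp)).symm)
    (isClique_bag ha₂ (hzq.later_subset_bag hp.end_mem) (hne (by simp) (by simp)))

theorem exists_longest_isDetour [Finite V] (σ : PerfectElimination G) {P : V → Prop}
    (h : ∃ z, P z ∧ ∃ (b₁ b₂ : V) (p : G.Walk b₁ b₂), σ.IsDetour z p) :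
    ∃ z, P z ∧ ∃ (b₁ b₂ : V) (p : G.Walk b₁ b₂), σ.IsDetour z p ∧
      ∀ z', P z' → ∀ (c₁ c₂ : V) (p' : G.Walk c₁ c₂), σ.IsDetour z' p' → p'.length ≤ p.length := by
  have := Fintype.ofFinite V
  let L : Set ℕ := {n | ∃ z, P z ∧ ∃ (b₁ b₂ : V) (p : G.Walk b₁ b₂), σ.IsDetour z p ∧ p.length = n}
  have hL : L.Nonempty := by
    obtain ⟨z, hz, b₁, b₂, p, hp⟩ := h
    exact ⟨p.length, z, hz, b₁, b₂, p, hp, rfl⟩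
  have hbdd : BddAbove L := by
    refine ⟨Fintype.card V, ?_⟩
    rintro _ ⟨z, -, b₁, b₂, p, hp, rfl⟩
    exact hp.isPath.length_lt.le
  obtain ⟨_, ⟨z, hz, b₁, b₂, p, hp, rfl⟩, hmax⟩ := hbdd.exists_isGreatest_of_nonempty hL
  exact ⟨z, hz, b₁, b₂, p, hp, fun z' hz' c₁ c₂ p' hp' ↦ hmax ⟨z', hz', c₁, c₂, p', hp', rfl⟩⟩

theorem IsCentredAt.nonempty_inter_of_longest_isDetour [Finite V] (h : σ.IsCentredAt C x)
    (hpair : σ.IsDeepestPair x a₁ a₂) (ha₁ : a₁ ∉ C) (ha₂ : a₂ ∉ C)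
    (hz : σ.IsLightBranch x a₁ a₂ z) {b₁ b₂ : V} {p : G.Walk b₁ b₂} (hp : σ.IsDetour z p)
    (hmax : ∀ z', σ.IsLightBranch x a₁ a₂ z' → ∀ (c₁ c₂ : V) (p' : G.Walk c₁ c₂),
      σ.IsDetour z' p' → p'.length ≤ p.length) (hb₁ : b₁ ∉ C) (hb₂ : b₂ ∉ C) :
    (C ∩ σ.subtree z).Nonempty := by
  by_contra hCz
  obtain ⟨hne, -⟩ := h.exists_isLightBranch hpair ha₁ ha₂
  obtain ⟨z', hz', c₁, c₂, p', s, harc, hp'⟩ := h.exists_isDetour hpair ha₁ ha₂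
  obtain ⟨t, ht, hpt, htsub⟩ := hp.exists_isPath_length_le hz hne
  have hpC : ∀ y ∈ p.support, y ∉ C := fun y hy hyC ↦ by
    obtain rfl | rfl | hyz := hp.mem_subtree y hy
    exacts [hb₁ hyC, hb₂ hyC, hCz ⟨y, hyC, hyz⟩]
  have htC : ∀ y ∈ t.support, y ∉ C := fun y hy ↦ by
    obtain rfl | rfl | hyp := htsub y hy
    exacts [ha₁, ha₂, hpC y hyp]
  have hlt := hz'.length_add_two_le harc hp' ht htC
  have hle := hmax z' hz' c₁ c₂ p' hp'
  omega

theorem exists_ncard_le_four [Finite V] (hF : ∀ C ∈ F, σ.IsCentredAt C x) :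
    ∃ B : Set V, B.ncard ≤ 4 ∧ ((∀ C ∈ F, (C ∩ B).Nonempty) ∨
      ∃ z, 2 * (σ.subtree z).ncard ≤ (σ.subtree x).ncard ∧
        ∀ C ∈ F, (C ∩ B).Nonempty ∨ (C ∩ σ.subtree z).Nonempty) := by
  obtain ⟨a₁, a₂, hpair⟩ := exists_isDeepestPair (σ := σ) x
  by_cases hdetour : ∃ z, σ.IsLightBranch x a₁ a₂ z ∧
      ∃ (b₁ b₂ : V) (p : G.Walk b₁ b₂), σ.IsDetour z p
  · obtain ⟨z, hz, b₁, b₂, p, hp, hmax⟩ := exists_longest_isDetour σ hdetour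
    refine ⟨{a₁, a₂, b₁, b₂}, ?_, .inr ⟨z, hz.two_mul_ncard_subtree_le, fun C hC ↦ ?_⟩⟩
    · classical
      simpa [← Set.ncard_coe_finset] using
        Finset.card_le_four (a := a₁) (b := a₂) (c := b₁) (d := b₂)
    · refine or_iff_not_imp_left.mpr fun hB ↦ ?_
      have hnotMem {v : V} (hv : v ∈ ({a₁, a₂, b₁, b₂} : Set V)) : v ∉ C :=
        fun hvC ↦ hB ⟨v, hvC, hv⟩
      exact (hF C hC).nonempty_inter_of_longest_isDetour hpair (hnotMem (by simp))
        (hnotMem (by simp)) hz hp hmax (hnotMem (by simp)) (hnotMem (by simp))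
  · have hcard : ({a₁, a₂} : Set V).ncard ≤ 2 := by simpa using Set.ncard_insert_le a₁ {a₂}
    refine ⟨{a₁, a₂}, hcard.trans (by norm_num), .inl fun C hC ↦ ?_⟩
    by_contra hB
    have hnotMem {v : V} (hv : v ∈ ({a₁, a₂} : Set V)) : v ∉ C := fun hvC ↦ hB ⟨v, hvC, hv⟩
    obtain ⟨z, hz, b₁, b₂, p, -, -, hp⟩ :=
      (hF C hC).exists_isDetour hpair (hnotMem (by simp)) (hnotMem (by simp))
    exact hdetour ⟨z, hz, b₁, b₂, p, hp⟩

theorem exists_ncard_le_of_ncard_subtree_lt [Finite V] (h2 : TwoConnected G)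
    (hroot : ∀ w, w ∈ σ.subtree r) (hF : ∀ C ∈ F, IsLongestCycleSupport G C)
    (hx : ∀ C ∈ F, (C ∩ σ.subtree x).Nonempty) {k : ℕ} (hk : (σ.subtree x).ncard < 2 ^ k) :
    ∃ A : Set V, A.ncard ≤ 4 * k ∧ ∀ C ∈ F, (C ∩ A).Nonempty := by
  induction k generalizing x F with
  | zero =>
    have := ncard_subtree_pos (σ := σ) (x := x)
    omega
  | succ k ih =>
    obtain ⟨y, hyx, hy⟩ := exists_forall_isCentredAt h2 hroot hF hx
    obtain ⟨B, hB, hall | ⟨z, hz, hall⟩⟩ := exists_ncard_le_four hy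
    · exact ⟨B, by omega, hall⟩
    have hzk : (σ.subtree z).ncard < 2 ^ k := by
      have := ncard_subtree_le hyx
      omega
    obtain ⟨A, hA, hAall⟩ := ih (F := {C ∈ F | (C ∩ σ.subtree z).Nonempty})
      (fun C hC ↦ hF C hC.1) (fun C hC ↦ hC.2) hzk
    refine ⟨A ∪ B, (Set.ncard_union_le A B).trans (by omega), fun C hC ↦ ?_⟩
    obtain hCB | hCz := hall C hC
    · exact hCB.mono (by grind)
    · exact (hAall C ⟨hC, hCz⟩).mono (by grind)

end PerfectElimination

/-- If `G` is an `n`-vertex 2-connected chordal graph, then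
`lct(G) ≤ 4(1 + ⌊log₂ n⌋)`. -/
theorem lct_le_of_twoConnected_chordal {V : Type} [Fintype V] (G : SimpleGraph V)
    (hchordal : IsChordal G) (h2 : TwoConnected G) :
    lct G ≤ 4 * (1 + Nat.log 2 (Fintype.card V)) := by
  obtain ⟨σ⟩ := hchordal.nonempty_perfectElimination
  have := h2.connected.nonempty
  obtain ⟨r, hr⟩ := Finite.exists_max σ.rank
  have hroot := PerfectElimination.mem_subtree_of_preconnected h2.connected.preconnected hr
  have hcard : (σ.subtree r).ncard < 2 ^ (1 + Nat.log 2 (Fintype.card V)) := by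
    rw [Set.eq_univ_of_forall hroot, Set.ncard_univ, Nat.card_eq_fintype_card, add_comm]
    exact Nat.lt_pow_succ_log_self one_lt_two _
  obtain ⟨A, hA, hhit⟩ := PerfectElimination.exists_ncard_le_of_ncard_subtree_lt h2 hroot
    (F := {C | IsLongestCycleSupport G C}) (fun _ hC ↦ hC)
    (fun _ hC ↦ hC.nontrivial.nonempty.mono fun v hv ↦ ⟨hv, hroot v⟩) hcard
  refine le_trans (Nat.sInf_le ⟨A, A.toFinite, rfl, fun v c hc ↦ ?_⟩) hA
  obtain ⟨w, hwc, hwA⟩ := hhit _ ⟨v, c, hc, rfl⟩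
  exact ⟨w, hwA, hwc⟩
end

section
/- Let G be a chordal graph with a tree representation T, let X be a rooted subtree of T with root x, and let H be a subgraph of G such that H has a core vertex in X but x is not a core vertex of H. Then there is a vertex w ∈ V(H) such that V(S(w)) ⊆ V(X) \ {x}. -/
open SimpleGraph

/-!
Some edge `uv` of `H` has a core vertex `t` in the rooted subtree at `x`. As `x` is not a core
vertex, one of `S u`, `S v` avoids `x`. That set is connected and contains the descendant `t` of
`x`, and the only way out of the rooted subtree is through `x`, so the whole set lies below `x`.
-/

theorem exists_walk_support_subset_of_preconnected_induce {W : Type*} {T : SimpleGraph W}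
    {s : Set W} {a b : W} (hs : (T.induce s).Preconnected) (ha : a ∈ s) (hb : b ∈ s) :
    ∃ q : T.Walk a b, ∀ c ∈ q.support, c ∈ s := by
  obtain ⟨q⟩ := hs ⟨a, ha⟩ ⟨b, hb⟩
  refine ⟨q.map (Embedding.induce s).toHom, fun c hc => ?_⟩
  obtain ⟨d, -, rfl⟩ := List.mem_map.1 (Walk.support_map (Embedding.induce s).toHom q ▸ hc)
  exact d.2

section RootedSubtree

variable {W : Type} {T : SimpleGraph W} {r x a b : W} {s : Set W}

theorem mem_rootedSubtree_iff_forall_walk :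
    a ∈ rootedSubtree T r x ↔ ∀ p : T.Walk r a, x ∈ p.support := by
  classical
  exact ⟨fun ha p => p.support_bypass_subset_support (ha p.bypass p.bypass_isPath),
    fun ha p _ => ha p⟩

theorem mem_rootedSubtree_of_walk_avoiding_root (q : T.Walk a b) (hq : x ∉ q.support)
    (hb : b ∈ rootedSubtree T r x) : a ∈ rootedSubtree T r x := by
  rw [mem_rootedSubtree_iff_forall_walk] at hb ⊢
  intro p
  exact ((Walk.mem_support_append_iff p q).1 (hb (p.append q))).resolve_right hq

theorem subset_rootedSubtree_diff_root_of_preconnected (hs : (T.induce s).Preconnected)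
    (hbs : b ∈ s) (hxs : x ∉ s) (hb : b ∈ rootedSubtree T r x) :
    s ⊆ rootedSubtree T r x \ {x} := by
  intro a ha
  obtain ⟨q, hqs⟩ := exists_walk_support_subset_of_preconnected_induce hs ha hbs
  have hxq : x ∉ q.support := fun h => hxs (hqs x h)
  exact ⟨mem_rootedSubtree_of_walk_avoiding_root q hxq hb, ne_of_mem_of_not_mem ha hxs⟩

end RootedSubtree

/-- The core of a subgraph `H` with respect to an arbitrary family `S` of sets indexed by the
vertices: the union of `S u ∩ S v` over the edges `uv` of `H`. It extends `TreeRep.core`, which is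
the case `S = R.S`, to families that need not come from a tree representation. -/
def familyCore {V W : Type*} {G : SimpleGraph V} (S : V → Set W) (H : G.Subgraph) : Set W :=
  {t | ∃ u v, H.Adj u v ∧ t ∈ S u ∧ t ∈ S v}

theorem subtree_in_rooted_subtree_of_core_general {V : Type*} {W : Type} {G : SimpleGraph V}
    {T : SimpleGraph W} {S : V → Set W} (hS : ∀ u, (T.induce (S u)).Preconnected) {r x : W}
    {H : G.Subgraph} (hin : ∃ t ∈ familyCore S H, t ∈ rootedSubtree T r x)
    (hx : x ∉ familyCore S H) : ∃ w ∈ H.verts, S w ⊆ rootedSubtree T r x \ {x} := by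
  obtain ⟨t, ⟨u, v, huv, htu, htv⟩, htX⟩ := hin
  by_cases hxu : x ∈ S u
  · have hxv : x ∉ S v := fun hxv => hx ⟨u, v, huv, hxu, hxv⟩
    exact ⟨v, huv.snd_mem, subset_rootedSubtree_diff_root_of_preconnected (hS v) htv hxv htX⟩
  · exact ⟨u, huv.fst_mem, subset_rootedSubtree_diff_root_of_preconnected (hS u) htu hxu htX⟩

/-- If a subgraph `H` of `G` has a core vertex in the subtree `X` of `T`
rooted at `x` (with `T` rooted at `r`), but `x` is not a core vertex of `H`, then some
`w ∈ V(H)` has `V(S(w)) ⊆ V(X) \ {x}`. -/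
theorem subtree_in_rooted_subtree_of_core {V W : Type} (G : SimpleGraph V)
    (T : SimpleGraph W) (hchordal : IsChordal G) (R : TreeRep G T) (r x : W)
    (H : G.Subgraph)
    (hin : ∃ t ∈ R.core H, t ∈ rootedSubtree T r x)
    (hx : x ∉ R.core H) :
    ∃ w ∈ H.verts, R.S w ⊆ rootedSubtree T r x \ {x} :=
  subtree_in_rooted_subtree_of_core_general (fun u => (R.subtree_connected u).preconnected) hin hx
end
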